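/- Let g ∈ L¹(ℝ₊)^{p×q} be a solution of the twofold Ellis–Gohberg inverse problem for the data set {a,b,c,d}. Then the operator W = [[I, H₊,g],[H₋,g*, I]] on L¹(ℝ₊)^p ⊕ L¹(ℝ₋)^q is invertible and its inverse is the block operator W⁻¹ = [[M₁₁, M₁₂],[M₂₁, M₂₂]], where M₁₁ = T₊,α T₊,α* − T₊,β T₊,β*, M₂₁ = H₋,γ T₊,α* − H₋,δ T₊,β*, M₁₂ = H₊,β T₋,δ* − H₊,α T₋,γ*, M₂₂ = T₋,δ T₋,δ* − T₋,γ T₋,γ*, with α = e_p + a, β = b, γ = c, δ = e_q + d. -/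

import Mathlib

/-!
The problem is transferred to the commutative Wiener algebra `ℂ ⊕ L¹(ℝ)` (unitization of `L¹(ℝ)`
with convolution), with the truncations `P`, `Q` to the two half-lines (`splitWA`). There a
Wiener–Hopf or Hankel operator is a multiplication followed by a truncation (`colK_link`), and the
Ellis–Gohberg conditions become equations between matrices over a split ring
(`abstractEG_of_sol`).

In that setting, where `*` is the adjoint, the equations show that `α*α - γ*γ - 1` is anticausal;
being self-adjoint and without constant term, it vanishes (`rel1`). Likewise `α*β - γ*δ` is both
causal and anticausal, so it vanishes (`rel2`). So for the block matrix
`A = [[α, β], [γ, δ]]` and `J = diag(1, -1)` one has `A* J A = J`. Since the Wiener algebra is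
commutative, one-sided inverses of square matrices are two-sided, hence also `A J A* = J` (`dual`).
With these relations the first column of `W M = I` and of `M W = I` is a computation with the
truncations (`right_inv`, `left_inv`), and the second column follows from the symmetry exchanging
the two half-lines.
-/

open MeasureTheory Set Matrix
open scoped ComplexConjugate

noncomputable section

abbrev MatF (r s : ℕ) := ℝ → Matrix (Fin r) (Fin s) ℂ

def conv {r s u : ℕ} (f : MatF r s) (h : MatF s u) : MatF r u :=
  fun t => Matrix.of fun i j => ∫ τ : ℝ, (f (t - τ) * h τ) i j

def adjF {r s : ℕ} (f : MatF r s) : MatF s r := fun t => (f (-t))ᴴ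

def L1Plus {r s : ℕ} (f : MatF r s) : Prop :=
  (∀ i j, Integrable fun t => f t i j) ∧ ∀ t < (0:ℝ), f t = 0

def L1Minus {r s : ℕ} (f : MatF r s) : Prop :=
  (∀ i j, Integrable fun t => f t i j) ∧ ∀ t > (0:ℝ), f t = 0

def μP : Measure ℝ := volume.restrict (Ici 0)
def μM : Measure ℝ := volume.restrict (Iic 0)

abbrev L1P (n : ℕ) := Lp (Fin n → ℂ) 1 μP
abbrev L1M (n : ℕ) := Lp (Fin n → ℂ) 1 μM

def IsHP {k m : ℕ} (r : MatF k m) (H : L1M m →L[ℂ] L1P k) : Prop :=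
  ∀ f : L1M m, ⇑(H f) =ᵐ[μP] fun t => ∫ s, (r (t - s)).mulVec (f s) ∂μM

def IsHM {k m : ℕ} (r : MatF k m) (H : L1P m →L[ℂ] L1M k) : Prop :=
  ∀ f : L1P m, ⇑(H f) =ᵐ[μM] fun t => ∫ s, (r (t - s)).mulVec (f s) ∂μP

def IsTP {k m : ℕ} (r₀ : Matrix (Fin k) (Fin m) ℂ) (r : MatF k m)
    (T : L1P m →L[ℂ] L1P k) : Prop :=
  ∀ f : L1P m, ⇑(T f) =ᵐ[μP] fun t => r₀.mulVec (f t) + ∫ s, (r (t - s)).mulVec (f s) ∂μP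

def IsTM {k m : ℕ} (r₀ : Matrix (Fin k) (Fin m) ℂ) (r : MatF k m)
    (T : L1M m →L[ℂ] L1M k) : Prop :=
  ∀ f : L1M m, ⇑(T f) =ᵐ[μM] fun t => r₀.mulVec (f t) + ∫ s, (r (t - s)).mulVec (f s) ∂μM

def blockCLM {X Y Z W : Type*} [NormedAddCommGroup X] [NormedSpace ℂ X]
    [NormedAddCommGroup Y] [NormedSpace ℂ Y] [NormedAddCommGroup Z] [NormedSpace ℂ Z]
    [NormedAddCommGroup W] [NormedSpace ℂ W]
    (A : X →L[ℂ] Z) (B : Y →L[ℂ] Z) (C : X →L[ℂ] W) (D : Y →L[ℂ] W) :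
    (X × Y) →L[ℂ] (Z × W) :=
  (A.comp (ContinuousLinearMap.fst ℂ X Y) + B.comp (ContinuousLinearMap.snd ℂ X Y)).prod
    (C.comp (ContinuousLinearMap.fst ℂ X Y) + D.comp (ContinuousLinearMap.snd ℂ X Y))

def InvertibleCLM {X Y : Type*} [NormedAddCommGroup X] [NormedSpace ℂ X]
    [NormedAddCommGroup Y] [NormedSpace ℂ Y] (T : X →L[ℂ] Y) : Prop :=
  ∃ S : Y →L[ℂ] X, S.comp T = ContinuousLinearMap.id ℂ X ∧ T.comp S = ContinuousLinearMap.id ℂ Y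

def AeZeroPos {r s : ℕ} (f : MatF r s) : Prop := ∀ᵐ t : ℝ, 0 < t → f t = 0
def AeZeroNeg {r s : ℕ} (f : MatF r s) : Prop := ∀ᵐ t : ℝ, t < 0 → f t = 0

def EGSol {p q : ℕ} (a : MatF p p) (b : MatF p q) (c : MatF q p) (d : MatF q q)
    (g : MatF p q) : Prop :=
  AeZeroPos (fun t => a t + conv g c t) ∧
  AeZeroNeg (fun t => adjF g t + conv (adjF g) a t + c t) ∧
  AeZeroNeg (fun t => d t + conv (adjF g) b t) ∧
  AeZeroPos (fun t => g t + conv g d t + b t)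


/-! ### The algebra of the problem in a split ring -/

section Algebra

/-- A commutative star ring with two complementary half-line projections `P`, `Q`, modelled on
the Wiener algebra `ℂ ⊕ L¹(ℝ)`: both projections kill the constants, and the elements `x` with
`P x + Q x = x` (those without constant term) form an ideal. The kernels of `Q` and `P` are the
subrings of causal and anticausal elements, and the involution interchanges them. -/
structure SplitRing {K : Type*} [CommRing K] [StarRing K] (P Q : K →+ K) : Prop where
  P_one : P 1 = 0
  Q_one : Q 1 = 0
  PQ : ∀ x, P (Q x) = 0
  QP : ∀ x, Q (P x) = 0
  mul_P : ∀ x y, P x = 0 → P y = 0 → P (x * y) = 0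
  mul_Q : ∀ x y, Q x = 0 → Q y = 0 → Q (x * y) = 0
  P_star : ∀ x, P (star x) = star (Q x)
  ideal : ∀ x y, P x + Q x = x → P (y * x) + Q (y * x) = y * x

variable {K : Type*} [CommRing K] [StarRing K] {P Q : K →+ K}

theorem SplitRing.Q_star (h : SplitRing P Q) (x : K) : Q (star x) = star (P x) := by
  have := h.P_star (star x)
  rw [star_star] at this
  rw [this, star_star]

theorem SplitRing.swap (h : SplitRing P Q) : SplitRing Q P where
  P_one := h.Q_one
  Q_one := h.P_one
  PQ := h.QP
  QP := h.PQ
  mul_P := h.mul_Q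
  mul_Q := h.mul_P
  P_star := h.Q_star
  ideal x y hx := by rw [add_comm]; exact h.ideal x y (by rw [add_comm]; exact hx)

variable {m n k l : Type*}

theorem SplitRing.mat_mul [Fintype n] (h : SplitRing P Q) {A : Matrix m n K} {B : Matrix n k K}
    (hA : P.mapMatrix A = 0) (hB : P.mapMatrix B = 0) : P.mapMatrix (A * B) = 0 := by
  ext i j
  simp only [AddMonoidHom.mapMatrix_apply, Matrix.map_apply, Matrix.mul_apply, map_sum,
    Matrix.zero_apply]
  exact Finset.sum_eq_zero fun x _ =>
    h.mul_P _ _ (congrFun (congrFun hA i) x) (congrFun (congrFun hB x) j)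

theorem SplitRing.mat_star (h : SplitRing P Q) (A : Matrix m n K) :
    P.mapMatrix Aᴴ = (Q.mapMatrix A)ᴴ := by
  ext i j
  simp [h.P_star]

theorem SplitRing.mat_PQ (h : SplitRing P Q) (A : Matrix m n K) :
    P.mapMatrix (Q.mapMatrix A) = 0 := by
  ext i j
  simp [h.PQ]

theorem SplitRing.mat_one [DecidableEq m] (h : SplitRing P Q) : P.mapMatrix (1 : Matrix m m K) = 0 := by
  ext i j
  by_cases hij : i = j <;> simp [hij, h.P_one]

theorem SplitRing.mat_ideal [Fintype n] (h : SplitRing P Q) {A : Matrix m n K} {B : Matrix n k K}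
    (hB : P.mapMatrix B + Q.mapMatrix B = B) :
    P.mapMatrix (A * B) + Q.mapMatrix (A * B) = A * B := by
  ext i j
  simp only [AddMonoidHom.mapMatrix_apply, Matrix.map_apply, Matrix.mul_apply, map_sum,
    Matrix.add_apply, ← Finset.sum_add_distrib]
  exact Finset.sum_congr rfl fun x _ => h.ideal _ _ (congrFun (congrFun hB x) j)

/-- Multiplication by an anticausal matrix followed by `P` does not see the `Q`-part. -/
theorem SplitRing.mul_proj [Fintype n] (h : SplitRing P Q) {A : Matrix m n K} {x : Matrix n l K}
    (hA : P.mapMatrix A = 0) (hx : P.mapMatrix x + Q.mapMatrix x = x) :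
    P.mapMatrix (A * P.mapMatrix x) = P.mapMatrix (A * x) := by
  have : P.mapMatrix (A * Q.mapMatrix x) = 0 := h.mat_mul hA (h.mat_PQ x)
  conv_rhs => rw [← hx, Matrix.mul_add, map_add, this, add_zero]

/-- A matrix without constant term that is anticausal together with its adjoint vanishes. -/
theorem SplitRing.eq_zero (h : SplitRing P Q) {X : Matrix m n K} (hX : P.mapMatrix X = 0)
    (hX' : P.mapMatrix Xᴴ = 0) (hE : P.mapMatrix X + Q.mapMatrix X = X) : X = 0 := by
  have : (Q.mapMatrix X)ᴴ = 0 := by rw [← h.mat_star, hX']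
  rw [← hE, hX, Matrix.conjTranspose_eq_zero.mp this, add_zero]

variable [Fintype m] [Fintype n] [DecidableEq m] [DecidableEq n]

/-- The twofold Ellis–Gohberg equations in a split ring, for the data `α, β, γ, δ` (with constant
terms `1, 0, 0, 1`) and the unknown `g`. -/
structure AbstractEG (P Q : K →+ K) (α : Matrix m m K) (β : Matrix m n K) (γ : Matrix n m K)
    (δ : Matrix n n K) (g : Matrix m n K) : Prop where
  α_Q : Q.mapMatrix α = 0
  β_Q : Q.mapMatrix β = 0
  γ_P : P.mapMatrix γ = 0
  δ_P : P.mapMatrix δ = 0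
  g_Q : Q.mapMatrix g = 0
  α_E : P.mapMatrix (α - 1) + Q.mapMatrix (α - 1) = α - 1
  β_E : P.mapMatrix β + Q.mapMatrix β = β
  γ_E : P.mapMatrix γ + Q.mapMatrix γ = γ
  δ_E : P.mapMatrix (δ - 1) + Q.mapMatrix (δ - 1) = δ - 1
  eq1 : P.mapMatrix (α + g * γ) = 0
  eq2 : Q.mapMatrix (gᴴ * α + γ) = 0
  eq3 : Q.mapMatrix (δ + gᴴ * β) = 0
  eq4 : P.mapMatrix (g * δ + β) = 0

variable {α : Matrix m m K} {β : Matrix m n K} {γ : Matrix n m K}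
    {δ : Matrix n n K} {g : Matrix m n K}

/-- The equations are invariant under exchanging the two half-lines, the roles of `α, δ` and of
`β, γ`, and replacing `g` by its adjoint. -/
theorem AbstractEG.swap (h : SplitRing P Q) (H : AbstractEG P Q α β γ δ g) :
    AbstractEG Q P δ γ β α gᴴ where
  α_Q := H.δ_P
  β_Q := H.γ_P
  γ_P := H.β_Q
  δ_P := H.α_Q
  g_Q := by rw [h.mat_star, H.g_Q, Matrix.conjTranspose_zero]
  α_E := by rw [add_comm]; exact H.δ_E
  β_E := by rw [add_comm]; exact H.γ_E
  γ_E := by rw [add_comm]; exact H.β_E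
  δ_E := by rw [add_comm]; exact H.α_E
  eq1 := H.eq3
  eq2 := by rw [Matrix.conjTranspose_conjTranspose]; exact H.eq4
  eq3 := by rw [Matrix.conjTranspose_conjTranspose]; exact H.eq1
  eq4 := H.eq2

/-- `α*α - γ*γ` is self-adjoint, and equals `α*(α + gγ) - (g*α + γ)*γ`, which is anticausal; so it
reduces to its constant term. -/
theorem AbstractEG.rel1 (h : SplitRing P Q) (H : AbstractEG P Q α β γ δ g) :
    αᴴ * α - γᴴ * γ = 1 := by
  have e : αᴴ * α - γᴴ * γ - 1 = αᴴ * (α + g * γ) - (gᴴ * α + γ)ᴴ * γ - 1 := by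
    simp only [Matrix.conjTranspose_add, Matrix.conjTranspose_mul,
      Matrix.conjTranspose_conjTranspose, Matrix.mul_add, Matrix.add_mul, Matrix.mul_assoc]
    abel
  have hP : P.mapMatrix (αᴴ * α - γᴴ * γ - 1) = 0 := by
    rw [e, map_sub, map_sub, h.mat_mul (by rw [h.mat_star, H.α_Q]; simp) H.eq1,
      h.mat_mul (by rw [h.mat_star, H.eq2]; simp) H.γ_P, h.mat_one]
    simp
  refine sub_eq_zero.mp (h.eq_zero hP ?_ ?_)
  · simpa using hP
  · have e2 : αᴴ * α - γᴴ * γ - 1 = αᴴ * (α - 1) + (α - 1)ᴴ - γᴴ * γ := by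
      simp only [Matrix.conjTranspose_sub, Matrix.conjTranspose_one, Matrix.mul_sub, Matrix.mul_one]
      abel
    have e3 : P.mapMatrix (α - 1)ᴴ + Q.mapMatrix (α - 1)ᴴ = (α - 1)ᴴ := by
      rw [h.mat_star, h.swap.mat_star, ← Matrix.conjTranspose_add, add_comm, H.α_E]
    rw [e2]
    conv_rhs => rw [← h.mat_ideal H.α_E (A := αᴴ), ← e3, ← h.mat_ideal H.γ_E (A := γᴴ)]
    simp only [map_sub, map_add]
    abel

/-- `α*β - γ*δ` has an anticausal and a causal expression in terms of the equations. -/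
theorem AbstractEG.rel2 (h : SplitRing P Q) (H : AbstractEG P Q α β γ δ g) :
    αᴴ * β - γᴴ * δ = 0 := by
  have e : αᴴ * β - γᴴ * δ = αᴴ * (g * δ + β) - (gᴴ * α + γ)ᴴ * δ := by
    simp only [Matrix.conjTranspose_add, Matrix.conjTranspose_mul,
      Matrix.conjTranspose_conjTranspose, Matrix.mul_add, Matrix.add_mul, Matrix.mul_assoc]
    abel
  have e' : αᴴ * β - γᴴ * δ = (α + g * γ)ᴴ * β - γᴴ * (δ + gᴴ * β) := by
    simp only [Matrix.conjTranspose_add, Matrix.conjTranspose_mul,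
      Matrix.mul_add, Matrix.add_mul, Matrix.mul_assoc]
    abel
  have hP : P.mapMatrix (αᴴ * β - γᴴ * δ) = 0 := by
    rw [e, map_sub, h.mat_mul (by rw [h.mat_star, H.α_Q]; simp) H.eq4,
      h.mat_mul (by rw [h.mat_star, H.eq2]; simp) H.δ_P, sub_zero]
  have hQ : Q.mapMatrix (αᴴ * β - γᴴ * δ) = 0 := by
    rw [e', map_sub, h.swap.mat_mul (by rw [h.swap.mat_star, H.eq1]; simp) H.β_Q,
      h.swap.mat_mul (by rw [h.swap.mat_star, H.γ_P]; simp) H.eq3, sub_zero]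
  have e2 : αᴴ * β - γᴴ * δ = αᴴ * β - (γᴴ * (δ - 1) + γᴴ) := by
    simp only [Matrix.mul_sub, Matrix.mul_one]
    abel
  have e3 : P.mapMatrix γᴴ + Q.mapMatrix γᴴ = γᴴ := by
    rw [h.mat_star, h.swap.mat_star, ← Matrix.conjTranspose_add, add_comm, H.γ_E]
  have hE : P.mapMatrix (αᴴ * β - γᴴ * δ) + Q.mapMatrix (αᴴ * β - γᴴ * δ)
      = αᴴ * β - γᴴ * δ := by
    rw [e2]
    have e4 := h.mat_ideal H.β_E (A := αᴴ)
    have e5 := h.mat_ideal H.δ_E (A := γᴴ)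
    simp only [map_sub, map_add]
    calc _ = (P.mapMatrix (αᴴ * β) + Q.mapMatrix (αᴴ * β)) -
          ((P.mapMatrix (γᴴ * (δ - 1)) + Q.mapMatrix (γᴴ * (δ - 1))) +
            (P.mapMatrix γᴴ + Q.mapMatrix γᴴ)) := by abel
      _ = _ := by rw [e3, e4, e5]
  rw [← hE, hP, hQ, add_zero]

/-- The relations `A*JA = J` for `A = [[α, β], [γ, δ]]` imply `AJA* = J`, since one-sided inverses
of square matrices over a commutative ring are two-sided. -/
theorem AbstractEG.dual (h : SplitRing P Q) (H : AbstractEG P Q α β γ δ g) :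
    α * αᴴ - β * βᴴ = 1 ∧ γ * αᴴ - δ * βᴴ = 0 := by
  have r1 := H.rel1 h
  have r2 := H.rel2 h
  have r3 := (H.swap h).rel1 h.swap
  have r4 := (H.swap h).rel2 h.swap
  have key : Matrix.fromBlocks αᴴ (-γᴴ) (-βᴴ) δᴴ * Matrix.fromBlocks α β γ δ = 1 := by
    rw [Matrix.fromBlocks_multiply, ← Matrix.fromBlocks_one, Matrix.fromBlocks_inj]
    simp only [Matrix.neg_mul]
    refine ⟨by rw [← r1]; abel, by rw [← r2]; abel, ?_, by rw [← r3]; abel⟩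
    rw [← r4]; abel
  have key2 := mul_eq_one_comm.mp key
  rw [Matrix.fromBlocks_multiply, ← Matrix.fromBlocks_one, Matrix.fromBlocks_inj] at key2
  simp only [Matrix.mul_neg, ← sub_eq_add_neg] at key2
  exact ⟨key2.1, key2.2.2.1⟩

/-- The first column of `W M = I`. -/
theorem AbstractEG.right_inv (h : SplitRing P Q) (H : AbstractEG P Q α β γ δ g)
    {f u : Matrix m l K} {v : Matrix n l K} {y : Matrix n l K} {x : Matrix m l K}
    (hf : P.mapMatrix f = f) (hu : u = P.mapMatrix (αᴴ * f)) (hv : v = P.mapMatrix (βᴴ * f))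
    (hx : x = P.mapMatrix (α * u) - P.mapMatrix (β * v))
    (hy : y = Q.mapMatrix (γ * u) - Q.mapMatrix (δ * v)) :
    x + P.mapMatrix (g * y) = f ∧ Q.mapMatrix (gᴴ * x) + y = 0 := by
  obtain ⟨d1, d2⟩ := H.dual h
  have hfQ : Q.mapMatrix f = 0 := by rw [← hf, h.swap.mat_PQ]
  have hfE : P.mapMatrix f + Q.mapMatrix f = f := by rw [hfQ, hf, add_zero]
  have huQ : Q.mapMatrix u = 0 := by rw [hu, h.swap.mat_PQ]
  have hvQ : Q.mapMatrix v = 0 := by rw [hv, h.swap.mat_PQ]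
  have huE : P.mapMatrix u + Q.mapMatrix u = u := by
    have := congrArg P.mapMatrix (h.mat_ideal hfE (A := αᴴ))
    rw [map_add, h.mat_PQ, ← hu, add_zero] at this
    rw [huQ, add_zero, this]
  have hvE : P.mapMatrix v + Q.mapMatrix v = v := by
    have := congrArg P.mapMatrix (h.mat_ideal hfE (A := βᴴ))
    rw [map_add, h.mat_PQ, ← hv, add_zero] at this
    rw [hvQ, add_zero, this]
  have hx' : x = α * u - β * v := by
    have h1 := h.mat_ideal huE (A := α)
    have h2 := h.mat_ideal hvE (A := β)
    rw [h.swap.mat_mul H.α_Q huQ, add_zero] at h1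
    rw [h.swap.mat_mul H.β_Q hvQ, add_zero] at h2
    rw [hx, h1, h2]
  have hz : P.mapMatrix (γ * u) - P.mapMatrix (δ * v) = 0 := by
    rw [hu, hv, h.mul_proj H.γ_P (h.mat_ideal hfE), h.mul_proj H.δ_P (h.mat_ideal hfE), ← map_sub,
      ← Matrix.mul_assoc, ← Matrix.mul_assoc, ← Matrix.sub_mul, d2, Matrix.zero_mul, map_zero]
  have hy' : y = γ * u - δ * v := by
    conv_rhs => rw [← h.mat_ideal huE (A := γ), ← h.mat_ideal hvE (A := δ)]
    rw [hy, add_sub_add_comm, hz, zero_add]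
  constructor
  · have e : x + g * y = (α + g * γ) * u - (g * δ + β) * v := by
      rw [hx', hy']
      simp only [Matrix.mul_sub, Matrix.add_mul, Matrix.mul_assoc]
      abel
    have hxP : P.mapMatrix x = x := by
      rw [hx', map_sub]
      have h1 := h.mat_ideal huE (A := α)
      have h2 := h.mat_ideal hvE (A := β)
      rw [h.swap.mat_mul H.α_Q huQ, add_zero] at h1
      rw [h.swap.mat_mul H.β_Q hvQ, add_zero] at h2
      rw [h1, h2]
    nth_rw 1 [← hxP]
    rw [← map_add, e, map_sub, hu, hv, h.mul_proj H.eq1 (h.mat_ideal hfE), h.mul_proj H.eq4 (h.mat_ideal hfE),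
      ← map_sub]
    have : (α + g * γ) * (αᴴ * f) - (g * δ + β) * (βᴴ * f) =
        (α * αᴴ - β * βᴴ) * f + g * ((γ * αᴴ - δ * βᴴ) * f) := by
      simp only [Matrix.mul_sub, Matrix.sub_mul, Matrix.add_mul, Matrix.mul_assoc]
      abel
    rw [this, d1, d2, Matrix.one_mul, Matrix.zero_mul, Matrix.mul_zero, add_zero, hf]
  · have hyQ : Q.mapMatrix y = y := by
      have h1 := h.swap.mat_ideal (A := γ) (by rw [add_comm]; exact huE)
      have h2 := h.swap.mat_ideal (A := δ) (by rw [add_comm]; exact hvE)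
      have h3 := congrArg Q.mapMatrix h1
      have h4 := congrArg Q.mapMatrix h2
      rw [map_add, h.swap.mat_PQ, add_zero] at h3 h4
      rw [hy, map_sub, h3, h4]
    nth_rw 1 [← hyQ]
    have e : gᴴ * x + y = (gᴴ * α + γ) * u - (δ + gᴴ * β) * v := by
      rw [hx', hy']
      simp only [Matrix.mul_sub, Matrix.add_mul, Matrix.mul_assoc]
      abel
    rw [← map_add, e, map_sub, h.swap.mat_mul H.eq2 huQ, h.swap.mat_mul H.eq3 hvQ, sub_zero]

/-- The first column of `M W = I`. -/
theorem AbstractEG.left_inv (h : SplitRing P Q) (H : AbstractEG P Q α β γ δ g)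
    {f u z : Matrix m l K} {v w k : Matrix n l K}
    (hf : P.mapMatrix f = f) (hu : u = P.mapMatrix (αᴴ * f)) (hv : v = P.mapMatrix (βᴴ * f))
    (hk : k = Q.mapMatrix (gᴴ * f))
    (hw : w = Q.mapMatrix (δᴴ * k)) (hz : z = Q.mapMatrix (γᴴ * k)) :
    (P.mapMatrix (α * u) - P.mapMatrix (β * v)) + (P.mapMatrix (β * w) - P.mapMatrix (α * z)) = f ∧
    (Q.mapMatrix (γ * u) - Q.mapMatrix (δ * v)) + (Q.mapMatrix (δ * w) - Q.mapMatrix (γ * z)) = 0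
    := by
  obtain ⟨d1, d2⟩ := H.dual h
  have hfQ : Q.mapMatrix f = 0 := by rw [← hf, h.swap.mat_PQ]
  have hfE : P.mapMatrix f + Q.mapMatrix f = f := by rw [hfQ, hf, add_zero]
  have hγ : Q.mapMatrix γᴴ = 0 := by rw [h.swap.mat_star, H.γ_P]; simp
  have hδ : Q.mapMatrix δᴴ = 0 := by rw [h.swap.mat_star, H.δ_P]; simp
  have h1 : Q.mapMatrix (αᴴ * f) + z = 0 := by
    rw [hz, hk, h.swap.mul_proj hγ (by rw [add_comm]; exact h.mat_ideal hfE), ← map_add,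
      ← Matrix.mul_assoc, ← Matrix.add_mul]
    refine h.swap.mat_mul ?_ hfQ
    have : αᴴ + γᴴ * gᴴ = (α + g * γ)ᴴ := by simp
    rw [this, h.swap.mat_star, H.eq1]; simp
  have h2 : Q.mapMatrix (βᴴ * f) + w = 0 := by
    rw [hw, hk, h.swap.mul_proj hδ (by rw [add_comm]; exact h.mat_ideal hfE), ← map_add,
      ← Matrix.mul_assoc, ← Matrix.add_mul]
    refine h.swap.mat_mul ?_ hfQ
    have : βᴴ + δᴴ * gᴴ = (g * δ + β)ᴴ := by simp [add_comm]
    rw [this, h.swap.mat_star, H.eq4]; simp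
  have h3 : u - z = αᴴ * f := by
    rw [← h.mat_ideal hfE (A := αᴴ), hu, eq_neg_of_add_eq_zero_left h1, sub_eq_add_neg]
  have h4 : v - w = βᴴ * f := by
    rw [← h.mat_ideal hfE (A := βᴴ), hv, eq_neg_of_add_eq_zero_left h2, sub_eq_add_neg]
  constructor
  · have e : α * u - β * v + (β * w - α * z) = (α * αᴴ - β * βᴴ) * f := by
      rw [Matrix.sub_mul, Matrix.mul_assoc, Matrix.mul_assoc, ← h3, ← h4]
      simp only [Matrix.mul_sub]
      abel
    rw [← map_sub, ← map_sub, ← map_add, e, d1, Matrix.one_mul, hf]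
  · have e : γ * u - δ * v + (δ * w - γ * z) = (γ * αᴴ - δ * βᴴ) * f := by
      rw [Matrix.sub_mul, Matrix.mul_assoc, Matrix.mul_assoc, ← h3, ← h4]
      simp only [Matrix.mul_sub]
      abel
    rw [← map_sub, ← map_sub, ← map_add, e, d2, Matrix.zero_mul, map_zero]

end Algebra


/-! ### The convolution algebra of integrable functions -/

section ConvolutionAlgebra

open scoped Convolution

/-- The space `L¹(ℝ)`, to be equipped with convolution as its multiplication. -/
def WL1 : Type := Lp ℂ 1 (volume : Measure ℝ)

namespace WL1

instance : AddCommGroup WL1 := inferInstanceAs (AddCommGroup (Lp ℂ 1 (volume : Measure ℝ)))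
instance : Module ℂ WL1 := inferInstanceAs (Module ℂ (Lp ℂ 1 (volume : Measure ℝ)))

/-- The class of an integrable function. -/
def mk (u : ℝ → ℂ) (hu : Integrable u) : WL1 := hu.toL1 u

/-- A representative of an element of `L¹(ℝ)`. -/
def rep (x : WL1) : ℝ → ℂ := (show Lp ℂ 1 (volume : Measure ℝ) from x)

theorem rep_integrable (x : WL1) : Integrable (rep x) := L1.integrable_coeFn _

theorem mk_rep (x : WL1) : mk (rep x) (rep_integrable x) = x := Integrable.toL1_coeFn _ _

theorem rep_mk {u : ℝ → ℂ} (hu : Integrable u) : rep (mk u hu) =ᵐ[volume] u := hu.coeFn_toL1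

theorem mk_eq {u v : ℝ → ℂ} (hu : Integrable u) (hv : Integrable v) :
    mk u hu = mk v hv ↔ u =ᵐ[volume] v := Integrable.toL1_eq_toL1_iff u v hu hv

theorem ind {p : WL1 → Prop} (h : ∀ u hu, p (mk u hu)) (x : WL1) : p x := mk_rep x ▸ h _ _

theorem mk_add {u v : ℝ → ℂ} (hu : Integrable u) (hv : Integrable v) :
    mk u hu + mk v hv = mk (u + v) (hu.add hv) := (Integrable.toL1_add u v hu hv).symm

theorem mk_smul (z : ℂ) {u : ℝ → ℂ} (hu : Integrable u) :
    z • mk u hu = mk (z • u) (hu.smul z) := (Integrable.toL1_smul u hu z).symm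

theorem mk_zero : mk 0 (integrable_zero _ _ _) = 0 := Integrable.toL1_zero _

theorem mk_eq_zero {u : ℝ → ℂ} (hu : Integrable u) : mk u hu = 0 ↔ u =ᵐ[volume] 0 := by
  rw [← mk_zero, mk_eq]

/-- Scalar convolution on the line. -/
abbrev cv (u v : ℝ → ℂ) : ℝ → ℂ := u ⋆[ContinuousLinearMap.mul ℂ ℂ, volume] v

theorem cv_int {u v : ℝ → ℂ} (hu : Integrable u) (hv : Integrable v) : Integrable (cv u v) :=
  hu.integrable_convolution _ hv

theorem cv_apply (u v : ℝ → ℂ) (t : ℝ) : cv u v t = ∫ s, u (t - s) * v s :=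
  convolution_eq_swap _

theorem cv_exists {u v : ℝ → ℂ} (hu : Integrable u) (hv : Integrable v) :
    ∀ᵐ t, Integrable fun s => u (t - s) * v s := by
  filter_upwards [hu.ae_convolution_exists (ContinuousLinearMap.mul ℂ ℂ) hv] with t ht
  exact ht.integrable_swap

theorem cv_comm (u v : ℝ → ℂ) : cv u v = cv v u := by
  have : (ContinuousLinearMap.mul ℂ ℂ).flip = ContinuousLinearMap.mul ℂ ℂ := by
    ext; simp
  rw [cv, ← convolution_flip, this]

theorem cv_congr {u v u' v' : ℝ → ℂ} (hu : u =ᵐ[volume] u') (hv : v =ᵐ[volume] v') :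
    cv u v = cv u' v' := convolution_congr _ hu hv

theorem cv_add {u v w : ℝ → ℂ} (hu : Integrable u) (hv : Integrable v) (hw : Integrable w) :
    cv u (v + w) =ᵐ[volume] cv u v + cv u w := by
  filter_upwards [hu.ae_convolution_exists (ContinuousLinearMap.mul ℂ ℂ) hv,
    hu.ae_convolution_exists (ContinuousLinearMap.mul ℂ ℂ) hw] with t h1 h2
  exact h1.distrib_add h2

theorem cv_assoc {u v w : ℝ → ℂ} (hu : Integrable u) (hv : Integrable v) (hw : Integrable w) :
    cv (cv u v) w =ᵐ[volume] cv u (cv v w) := by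
  filter_upwards [hu.norm.ae_convolution_exists (ContinuousLinearMap.mul ℝ ℝ)
    (hv.norm.integrable_convolution (ContinuousLinearMap.mul ℝ ℝ) hw.norm)] with t ht
  refine convolution_assoc _ _ _ _ (fun x y z => ?_) hu.aestronglyMeasurable
    hv.aestronglyMeasurable hw.aestronglyMeasurable (hu.ae_convolution_exists _ hv)
    (hv.norm.ae_convolution_exists _ hw.norm) ht
  simp [mul_assoc]

instance : Mul WL1 := ⟨fun x y => mk (cv (rep x) (rep y)) (cv_int x.rep_integrable y.rep_integrable)⟩

theorem mk_mul {u v : ℝ → ℂ} (hu : Integrable u) (hv : Integrable v) :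
    mk u hu * mk v hv = mk (cv u v) (cv_int hu hv) :=
  (mk_eq _ _).2 (by rw [cv_congr (rep_mk hu) (rep_mk hv)])

theorem mul_comm' (x y : WL1) : x * y = y * x :=
  (mk_eq _ _).2 (by rw [cv_comm])

theorem mul_add' (x y z : WL1) : x * (y + z) = x * y + x * z := by
  induction x using ind with | _ u hu
  induction y using ind with | _ v hv
  induction z using ind with | _ w hw
  simp only [mk_add, mk_mul, mk_eq]
  exact cv_add hu hv hw

instance : NonUnitalCommRing WL1 :=
  { (inferInstance : AddCommGroup WL1), (inferInstance : Mul WL1) with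
    left_distrib := mul_add'
    right_distrib := fun x y z => by rw [mul_comm', mul_add', mul_comm' z, mul_comm' z]
    zero_mul := fun x => by
      rw [mul_comm']
      have := mul_add' x 0 0
      rwa [add_zero, left_eq_add] at this
    mul_zero := fun x => by
      have := mul_add' x 0 0
      rwa [add_zero, left_eq_add] at this
    mul_comm := mul_comm'
    mul_assoc := fun x y z => by
      induction x using ind with | _ u hu
      induction y using ind with | _ v hv
      induction z using ind with | _ w hw
      simp only [mk_mul, mk_eq]
      exact cv_assoc hu hv hw }

instance : IsScalarTower ℂ WL1 WL1 := ⟨fun z x y => by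
  induction x using ind with | _ u hu
  induction y using ind with | _ v hv
  simp only [smul_eq_mul, mk_smul, mk_mul, mk_eq]
  rw [cv, smul_convolution]⟩

instance : SMulCommClass ℂ WL1 WL1 := ⟨fun z x y => by
  simp only [smul_eq_mul]
  rw [mul_comm x y, mul_comm x, ← smul_eq_mul, ← smul_eq_mul, smul_assoc]⟩

/-- The involution `u*(t) = conj (u (-t))` on functions. -/
def sf (u : ℝ → ℂ) : ℝ → ℂ := fun t => conj (u (-t))

theorem sf_int {u : ℝ → ℂ} (hu : Integrable u) : Integrable (sf u) :=
  (Complex.conjCLE.toContinuousLinearMap.integrable_comp hu.comp_neg :)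

theorem ae_neg {p : ℝ → Prop} (h : ∀ᵐ t, p t) : ∀ᵐ t : ℝ, p (-t) :=
  (Measure.measurePreserving_neg volume).quasiMeasurePreserving.ae h

theorem sf_congr {u v : ℝ → ℂ} (h : u =ᵐ[volume] v) : sf u =ᵐ[volume] sf v := by
  filter_upwards [ae_neg h] with t ht
  simp [sf, ht]

theorem sf_cv (u v : ℝ → ℂ) : sf (cv u v) = cv (sf u) (sf v) := by
  ext t
  simp only [sf, cv_apply]
  rw [← integral_conj, ← integral_neg_eq_self]
  congr 1
  ext s
  simp only [map_mul]
  congr 3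
  ring

instance : Star WL1 := ⟨fun x => mk (sf (rep x)) (sf_int x.rep_integrable)⟩

theorem star_mk {u : ℝ → ℂ} (hu : Integrable u) : star (mk u hu) = mk (sf u) (sf_int hu) :=
  (mk_eq _ _).2 (sf_congr (rep_mk hu))

instance : StarRing WL1 where
  star_involutive x := by
    induction x using ind with | _ u hu
    rw [star_mk, star_mk, mk_eq]
    exact .of_forall fun t => by simp [sf]
  star_mul x y := by
    induction x using ind with | _ u hu
    induction y using ind with | _ v hv
    rw [mul_comm (star _)]
    simp only [star_mk, mk_mul, sf_cv]
  star_add x y := by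
    induction x using ind with | _ u hu
    induction y using ind with | _ v hv
    simp only [star_mk, mk_add, mk_eq]
    exact .of_forall fun t => by simp [sf]

instance : StarModule ℂ WL1 where
  star_smul z x := by
    induction x using ind with | _ u hu
    simp only [star_mk, mk_smul, mk_eq]
    exact .of_forall fun t => by simp [sf]

/-- Truncation to a measurable set. -/
def proj (S : Set ℝ) (hS : MeasurableSet S) : WL1 →+ WL1 :=
  AddMonoidHom.mk' (fun x => mk (S.indicator (rep x)) (x.rep_integrable.indicator hS)) (by
    intro x y
    induction x using ind with | _ u hu
    induction y using ind with | _ v hv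
    simp only [mk_add, mk_eq]
    filter_upwards [rep_mk (hu.add hv), rep_mk hu, rep_mk hv] with t h1 h2 h3
    by_cases ht : t ∈ S <;> simp [ht, h1, h2, h3])

theorem proj_mk {S : Set ℝ} (hS : MeasurableSet S) {u : ℝ → ℂ} (hu : Integrable u) :
    proj S hS (mk u hu) = mk (S.indicator u) (hu.indicator hS) :=
  (mk_eq ((rep_integrable _).indicator hS) _).2 (by
    filter_upwards [rep_mk hu] with t ht
    by_cases h : t ∈ S <;> simp [h, ht])

theorem proj_smul {S : Set ℝ} (hS : MeasurableSet S) (z : ℂ) (x : WL1) :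
    proj S hS (z • x) = z • proj S hS x := by
  induction x using ind with | _ u hu
  simp only [mk_smul, proj_mk, mk_eq]
  exact .of_forall fun t => by by_cases h : t ∈ S <;> simp [h]

/-- Elements supported in a measurable additive semigroup (here the complement of `S`) are closed
under convolution. -/
theorem proj_mul {S : Set ℝ} (hS : MeasurableSet S) (hadd : ∀ s t, s ∉ S → t ∉ S → s + t ∉ S)
    {x y : WL1} (hx : proj S hS x = 0) (hy : proj S hS y = 0) : proj S hS (x * y) = 0 := by
  induction x using ind with | _ u hu
  induction y using ind with | _ v hv
  rw [proj_mk, mk_eq_zero] at hx hy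
  have hu' : u =ᵐ[volume] Sᶜ.indicator u := by
    filter_upwards [hx] with t ht
    by_cases h : t ∈ S <;> simp_all
  have hv' : v =ᵐ[volume] Sᶜ.indicator v := by
    filter_upwards [hy] with t ht
    by_cases h : t ∈ S <;> simp_all
  rw [mk_mul, proj_mk, mk_eq_zero]
  refine .of_forall fun t => ?_
  by_cases h : t ∈ S
  · rw [indicator_of_mem h, cv_congr hu' hv', cv_apply]
    refine integral_eq_zero_of_ae (.of_forall fun s => ?_)
    by_cases h1 : t - s ∈ S
    · simp [h1]
    by_cases h2 : s ∈ S
    · simp [h2]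
    exact absurd h (by simpa using hadd _ _ h1 h2)
  · simp [h]

theorem proj_proj {S T : Set ℝ} (hS : MeasurableSet S) (hT : MeasurableSet T) (hd : Disjoint S T)
    (x : WL1) : proj S hS (proj T hT x) = 0 := by
  induction x using ind with | _ u hu
  rw [proj_mk, proj_mk, mk_eq_zero]
  rw [indicator_indicator, hd.inter_eq, indicator_empty]
  rfl

theorem proj_star {S T : Set ℝ} (hS : MeasurableSet S) (hT : MeasurableSet T)
    (hd : ∀ t, t ∈ S ↔ -t ∈ T) (x : WL1) : proj S hS (star x) = star (proj T hT x) := by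
  induction x using ind with | _ u hu
  rw [proj_mk, star_mk, star_mk, proj_mk, mk_eq]
  refine .of_forall fun t => ?_
  by_cases h : t ∈ S
  · simp [h, (hd t).1 h, sf]
  · simp [h, sf, mt (hd t).2 h]

theorem proj_add (x : WL1) :
    proj (Ioi 0) measurableSet_Ioi x + proj (Iio 0) measurableSet_Iio x = x := by
  induction x using ind with | _ u hu
  rw [proj_mk, proj_mk, mk_add, mk_eq]
  filter_upwards [Measure.ae_ne volume 0] with t ht
  rcases lt_or_gt_of_ne ht with h | h
  · simp [h, h.le]
  · simp [h, h.le]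

end WL1

/-- The Wiener algebra `ℂ ⊕ L¹(ℝ)`. -/
abbrev WA := Unitization ℂ WL1

/-- Truncation on the Wiener algebra; it kills the constants. -/
def PK (S : Set ℝ) (hS : MeasurableSet S) : WA →+ WA :=
  AddMonoidHom.mk' (fun x => Unitization.inr (WL1.proj S hS x.snd)) (by
    intro x y
    rw [Unitization.snd_add, map_add, Unitization.inr_add])

theorem PK_apply {S : Set ℝ} (hS : MeasurableSet S) (x : WA) :
    PK S hS x = Unitization.inr (WL1.proj S hS x.snd) := rfl

theorem PK_eq_zero {S : Set ℝ} (hS : MeasurableSet S) (x : WA) :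
    PK S hS x = 0 ↔ WL1.proj S hS x.snd = 0 := by
  rw [PK_apply, ← Unitization.inr_zero ℂ, Unitization.inr_injective.eq_iff]

theorem PK_mul {S : Set ℝ} (hS : MeasurableSet S) (hadd : ∀ s t, s ∉ S → t ∉ S → s + t ∉ S)
    {x y : WA} (hx : PK S hS x = 0) (hy : PK S hS y = 0) : PK S hS (x * y) = 0 := by
  rw [PK_eq_zero] at *
  rw [Unitization.snd_mul, map_add, map_add, WL1.proj_smul, WL1.proj_smul, hx, hy,
    WL1.proj_mul hS hadd hx hy]
  simp

/-- Truncation to the positive half-line. -/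
abbrev Pp : WA →+ WA := PK (Ioi 0) measurableSet_Ioi
/-- Truncation to the negative half-line. -/
abbrev Pm : WA →+ WA := PK (Iio 0) measurableSet_Iio

theorem Pp_add_Pm (x : WA) : Pp x + Pm x = Unitization.inr x.snd := by
  rw [PK_apply, PK_apply, ← Unitization.inr_add, WL1.proj_add]

theorem splitWA : SplitRing Pp Pm where
  P_one := by simp [PK_eq_zero]
  Q_one := by simp [PK_eq_zero]
  PQ x := by
    rw [PK_eq_zero, PK_apply, Unitization.snd_inr, WL1.proj_proj]
    exact Set.disjoint_left.2 fun t h1 h2 => lt_asymm (mem_Ioi.1 h1) h2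
  QP x := by
    rw [PK_eq_zero, PK_apply, Unitization.snd_inr, WL1.proj_proj]
    exact Set.disjoint_left.2 fun t h1 h2 => lt_asymm (mem_Iio.1 h1) h2
  mul_P x y := PK_mul _ fun s t hs ht => by
    simp only [mem_Ioi, not_lt] at *
    linarith
  mul_Q x y := PK_mul _ fun s t hs ht => by
    simp only [mem_Iio, not_lt] at *
    linarith
  P_star x := by
    rw [PK_apply, PK_apply, Unitization.snd_star, WL1.proj_star (T := Iio 0) _ measurableSet_Iio (by simp),
      Unitization.inr_star]
  ideal x y hx := by
    rw [Pp_add_Pm] at *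
    have : x.fst = 0 := by rw [← hx, Unitization.fst_inr]
    ext <;> simp [this]

end ConvolutionAlgebra


/-! ### Matrix functions and Wiener–Hopf operators in the Wiener algebra -/

section Bridge

open WL1

open scoped Classical in
/-- The element of the Wiener algebra given by an integrable function (`0` if it is not
integrable). -/
def toK (u : ℝ → ℂ) : WA := if h : Integrable u then Unitization.inr (mk u h) else 0

theorem toK_def {u : ℝ → ℂ} (h : Integrable u) : toK u = Unitization.inr (mk u h) := dif_pos h

theorem toK_eq_iff {u v : ℝ → ℂ} (hu : Integrable u) (hv : Integrable v) :
    toK u = toK v ↔ u =ᵐ[volume] v := by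
  rw [toK_def hu, toK_def hv, Unitization.inr_injective.eq_iff, mk_eq]

theorem toK_congr {u v : ℝ → ℂ} (hv : Integrable v) (h : u =ᵐ[volume] v) :
    toK u = toK v := (toK_eq_iff (hv.congr h.symm) hv).2 h

theorem toK_add {u v : ℝ → ℂ} (hu : Integrable u) (hv : Integrable v) :
    toK (fun t => u t + v t) = toK u + toK v := by
  rw [toK_def hu, toK_def hv, ← Unitization.inr_add, mk_add]
  exact toK_def (hu.add hv)

theorem toK_zero : toK (fun _ => 0) = 0 := by
  calc toK (fun _ => 0) = Unitization.inr (mk 0 (integrable_zero _ _ _)) :=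
        toK_def (u := 0) (integrable_zero _ _ _)
    _ = 0 := by rw [mk_zero, Unitization.inr_zero]

theorem toK_sum {ι : Type*} (s : Finset ι) {u : ι → ℝ → ℂ} (hu : ∀ i, Integrable (u i)) :
    toK (fun t => ∑ i ∈ s, u i t) = ∑ i ∈ s, toK (u i) := by
  classical
  induction s using Finset.induction_on with
  | empty => simp [toK_zero]
  | insert i s hi ih =>
    simp only [Finset.sum_insert hi]
    rw [toK_add (hu i) (integrable_finsetSum _ fun i _ => hu i), ih]

theorem toK_mul {u v : ℝ → ℂ} (hu : Integrable u) (hv : Integrable v) :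
    toK u * toK v = toK (cv u v) := by
  rw [toK_def hu, toK_def hv, toK_def (cv_int hu hv), ← Unitization.inr_mul, mk_mul]

theorem toK_smul (z : ℂ) {u : ℝ → ℂ} (hu : Integrable u) :
    algebraMap ℂ WA z * toK u = toK (fun t => z * u t) := by
  rw [toK_def hu, toK_def (hu.const_mul z), ← Algebra.smul_def, ← Unitization.inr_smul, mk_smul]
  rfl

theorem toK_star {u : ℝ → ℂ} (hu : Integrable u) : star (toK u) = toK (sf u) := by
  rw [toK_def hu, toK_def (sf_int hu), ← Unitization.inr_star, star_mk]

theorem PK_toK {S : Set ℝ} (hS : MeasurableSet S) {u : ℝ → ℂ} (hu : Integrable u) :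
    PK S hS (toK u) = toK (S.indicator u) := by
  rw [toK_def hu, toK_def (hu.indicator hS), PK_apply, Unitization.snd_inr, proj_mk]

theorem PK_toK_eq_zero {S : Set ℝ} (hS : MeasurableSet S) {u : ℝ → ℂ} (hu : Integrable u)
    (h : ∀ᵐ t, t ∈ S → u t = 0) : PK S hS (toK u) = 0 := by
  rw [PK_toK hS hu, ← toK_zero]
  refine toK_congr (integrable_zero _ _ _) ?_
  filter_upwards [h] with t ht
  by_cases hs : t ∈ S <;> simp [hs, ht]

theorem toK_E {u : ℝ → ℂ} (hu : Integrable u) : Pp (toK u) + Pm (toK u) = toK u := by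
  rw [Pp_add_Pm, toK_def hu, Unitization.snd_inr]

/-- Entrywise integrability of a matrix function. -/
abbrev IntF {r s : ℕ} (f : MatF r s) : Prop := ∀ i j, Integrable fun t => f t i j

/-- The matrix over the Wiener algebra given by an integrable matrix function. -/
def toKM {r s : ℕ} (f : MatF r s) : Matrix (Fin r) (Fin s) WA :=
  Matrix.of fun i j => toK fun t => f t i j

theorem toKM_apply {r s : ℕ} (f : MatF r s) (i j) : toKM f i j = toK fun t => f t i j := rfl

theorem toKM_add {r s : ℕ} {f h : MatF r s} (hf : IntF f) (hh : IntF h) :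
    toKM (fun t => f t + h t) = toKM f + toKM h := by
  ext1 i j
  exact toK_add (hf i j) (hh i j)

theorem adjF_int {r s : ℕ} {f : MatF r s} (hf : IntF f) : IntF (adjF f) :=
  fun i j => sf_int (hf j i)

theorem toKM_adjF {r s : ℕ} {f : MatF r s} (hf : IntF f) : toKM (adjF f) = (toKM f)ᴴ := by
  ext1 i j
  rw [Matrix.conjTranspose_apply, toKM_apply, toKM_apply, toK_star (hf j i)]
  rfl

theorem conv_ae {r s u : ℕ} {f : MatF r s} {h : MatF s u} (hf : IntF f) (hh : IntF h)
    (i : Fin r) (j : Fin u) : (fun t => conv f h t i j) =ᵐ[volume]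
      fun t => ∑ l, cv (fun t => f t i l) (fun t => h t l j) t := by
  have : ∀ᵐ t, ∀ l, Integrable fun s => f (t - s) i l * h s l j :=
    ae_all_iff.2 fun l => cv_exists (u := fun t => f t i l) (v := fun t => h t l j) (hf i l) (hh l j)
  filter_upwards [this] with t ht
  simp only [conv, Matrix.of_apply, Matrix.mul_apply, cv_apply]
  exact integral_finsetSum _ fun l _ => ht l

theorem conv_int {r s u : ℕ} {f : MatF r s} {h : MatF s u} (hf : IntF f) (hh : IntF h) :
    IntF (conv f h) := fun i j =>
  (integrable_finsetSum _ fun l _ => cv_int (hf i l) (hh l j)).congr (conv_ae hf hh i j).symm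

theorem toKM_conv {r s u : ℕ} {f : MatF r s} {h : MatF s u} (hf : IntF f) (hh : IntF h) :
    toKM (conv f h) = toKM f * toKM h := by
  ext1 i j
  have hint : ∀ l, Integrable (cv (fun t => f t i l) fun t => h t l j) :=
    fun l => cv_int (hf i l) (hh l j)
  have h1 : toKM (conv f h) i j = toK fun t => ∑ l, cv (fun t => f t i l) (fun t => h t l j) t :=
    toK_congr (integrable_finsetSum _ fun l _ => hint l) (conv_ae hf hh i j)
  rw [h1, toK_sum _ hint, Matrix.mul_apply]
  exact Finset.sum_congr rfl fun l _ => (toK_mul (hf i l) (hh l j)).symm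

theorem PK_toKM_eq_zero {r s : ℕ} {S : Set ℝ} (hS : MeasurableSet S) {f : MatF r s}
    (hf : IntF f) (h : ∀ᵐ t, t ∈ S → f t = 0) : (PK S hS).mapMatrix (toKM f) = 0 := by
  ext1 i j
  refine PK_toK_eq_zero hS (hf i j) ?_
  filter_upwards [h] with t ht hs
  simp [ht hs]

theorem toKM_E {r s : ℕ} {f : MatF r s} (hf : IntF f) :
    Pp.mapMatrix (toKM f) + Pm.mapMatrix (toKM f) = toKM f := by
  ext1 i j
  exact toK_E (hf i j)

/-- A solution of the Ellis–Gohberg problem solves the abstract problem in the Wiener algebra. -/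
theorem abstractEG_of_sol {p q : ℕ}
    {a : MatF p p} {b : MatF p q} {c : MatF q p} {d : MatF q q}
    (ha : L1Plus a) (hb : L1Plus b) (hc : L1Minus c) (hd : L1Minus d)
    {g : MatF p q} (hg : L1Plus g) (hsol : EGSol a b c d g) :
    AbstractEG Pp Pm (1 + toKM a) (toKM b) (toKM c) (1 + toKM d) (toKM g) := by
  obtain ⟨h1, h2, h3, h4⟩ := hsol
  have plus : ∀ {r s : ℕ} {f : MatF r s}, L1Plus f → Pm.mapMatrix (toKM f) = 0 :=
    fun hf => PK_toKM_eq_zero _ hf.1 (.of_forall hf.2)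
  have minus : ∀ {r s : ℕ} {f : MatF r s}, L1Minus f → Pp.mapMatrix (toKM f) = 0 :=
    fun hf => PK_toKM_eq_zero _ hf.1 (.of_forall hf.2)
  have hgs := adjF_int hg.1
  refine ⟨?_, plus hb, minus hc, ?_, plus hg, ?_, toKM_E hb.1, toKM_E hc.1, ?_, ?_, ?_, ?_, ?_⟩
  · rw [map_add, splitWA.swap.mat_one, plus ha, add_zero]
  · rw [map_add, splitWA.mat_one, minus hd, add_zero]
  · rw [add_sub_cancel_left, toKM_E ha.1]
  · rw [add_sub_cancel_left, toKM_E hd.1]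
  · rw [add_assoc, map_add, splitWA.mat_one, ← toKM_conv hg.1 hc.1,
      ← toKM_add ha.1 (conv_int hg.1 hc.1), zero_add]
    exact PK_toKM_eq_zero _ (fun i j => (ha.1 i j).add (conv_int hg.1 hc.1 i j)) h1
  · rw [← toKM_adjF hg.1, Matrix.mul_add, Matrix.mul_one, ← toKM_conv hgs ha.1,
      ← toKM_add hgs (conv_int hgs ha.1), ← toKM_add _ hc.1]
    · exact PK_toKM_eq_zero _ (fun i j => ((hgs i j).add (conv_int hgs ha.1 i j)).add (hc.1 i j)) h2
    · exact fun i j => (hgs i j).add (conv_int hgs ha.1 i j)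
  · rw [add_assoc, map_add, splitWA.swap.mat_one, ← toKM_adjF hg.1, ← toKM_conv hgs hb.1,
      ← toKM_add hd.1 (conv_int hgs hb.1), zero_add]
    exact PK_toKM_eq_zero _ (fun i j => (hd.1 i j).add (conv_int hgs hb.1 i j)) h3
  · rw [Matrix.mul_add, Matrix.mul_one, ← toKM_conv hg.1 hd.1,
      ← toKM_add hg.1 (conv_int hg.1 hd.1), ← toKM_add _ hb.1]
    · exact PK_toKM_eq_zero _
        (fun i j => ((hg.1 i j).add (conv_int hg.1 hd.1 i j)).add (hb.1 i j)) h4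
    · exact fun i j => (hg.1 i j).add (conv_int hg.1 hd.1 i j)

/-- The column over the Wiener algebra given by a vector function on `S`, extended by zero. -/
def colK {m : ℕ} (S : Set ℝ) (F : ℝ → Fin m → ℂ) : Matrix (Fin m) (Fin 1) WA :=
  Matrix.of fun i _ => toK (S.indicator fun t => F t i)

theorem colK_apply {m : ℕ} (S : Set ℝ) (F : ℝ → Fin m → ℂ) (i j) :
    colK S F i j = toK (S.indicator fun t => F t i) := rfl

theorem colK_int {m : ℕ} {S : Set ℝ} (hS : MeasurableSet S) {F : ℝ → Fin m → ℂ}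
    (hF : Integrable F (volume.restrict S)) (i : Fin m) :
    Integrable (S.indicator fun t => F t i) :=
  (integrable_indicator_iff hS).2 (hF.eval i)

theorem PK_colK {m : ℕ} {S : Set ℝ} (hS : MeasurableSet S) {F : ℝ → Fin m → ℂ}
    (hF : Integrable F (volume.restrict S)) : (PK S hS).mapMatrix (colK S F) = colK S F := by
  ext1 i j
  refine (PK_toK hS (colK_int hS hF i)).trans ?_
  rw [indicator_indicator, inter_self]
  rfl

/-- Truncated multiplication in the Wiener algebra implements the Wiener–Hopf operators (`S = T`)
and the Hankel operators (`r₀ = 0`). -/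
theorem colK_link {k m : ℕ} {S T : Set ℝ} (hS : MeasurableSet S) (hT : MeasurableSet T)
    {r₀ : Matrix (Fin k) (Fin m) ℂ} {r : MatF k m} (hr : IntF r) (h : r₀ = 0 ∨ S = T)
    {F : ℝ → Fin m → ℂ} (hF : Integrable F (volume.restrict S)) {G : ℝ → Fin k → ℂ}
    (hG : G =ᵐ[volume.restrict T] fun t => r₀.mulVec (F t) +
      ∫ s, (r (t - s)).mulVec (F s) ∂(volume.restrict S)) :
    colK T G = (PK T hT).mapMatrix ((r₀.map (algebraMap ℂ WA) + toKM r) * colK S F) := by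
  have hFi := colK_int hS hF
  have hterm : ∀ i j, Integrable fun t => r₀ i j * S.indicator (fun t => F t j) t +
      cv (fun t => r t i j) (S.indicator fun t => F t j) t := fun i j =>
    ((hFi j).const_mul _).add (cv_int (hr i j) (hFi j))
  ext1 i j
  have e : ((r₀.map (algebraMap ℂ WA) + toKM r) * colK S F) i j =
      toK fun t => ∑ l, (r₀ i l * S.indicator (fun t => F t l) t +
        cv (fun t => r t i l) (S.indicator fun t => F t l) t) := by
    rw [toK_sum _ (hterm i), Matrix.mul_apply]
    refine Finset.sum_congr rfl fun l _ => ?_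
    rw [toK_add ((hFi l).const_mul _) (cv_int (hr i l) (hFi l)), ← toK_smul _ (hFi l),
      ← toK_mul (hr i l) (hFi l), Matrix.add_apply, add_mul]
    rfl
  rw [AddMonoidHom.mapMatrix_apply, Matrix.map_apply, e,
    PK_toK hT (integrable_finsetSum _ fun l _ => hterm i l), colK_apply]
  refine toK_congr ((integrable_finsetSum _ fun l _ => hterm i l).indicator hT) ?_
  have hex : ∀ᵐ t, ∀ i l, Integrable fun s => r (t - s) i l * S.indicator (fun t => F t l) s :=
    ae_all_iff.2 fun i => ae_all_iff.2 fun l =>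
      cv_exists (u := fun t => r t i l) (v := S.indicator fun t => F t l) (hr i l) (hFi l)
  rw [Filter.EventuallyEq, ae_restrict_iff' hT] at hG
  filter_upwards [hG, hex] with t h1 h2
  by_cases ht : t ∈ T
  swap
  · simp [ht]
  rw [indicator_of_mem ht, indicator_of_mem ht, h1 ht, Finset.sum_add_distrib]
  have h3 : ∀ i l, Integrable (fun s => r (t - s) i l * F s l) (volume.restrict S) := fun i l => by
    refine (integrable_indicator_iff hS).1 ?_
    refine (h2 i l).congr (.of_forall fun s => ?_)
    by_cases hs : s ∈ S <;> simp [hs]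
  have h4 : Integrable (fun s => (r (t - s)).mulVec (F s)) (volume.restrict S) :=
    Integrable.of_eval fun i => by
      simp only [Matrix.mulVec, dotProduct]
      exact integrable_finsetSum _ fun l _ => h3 i l
  rw [Pi.add_apply, eval_integral fun i => h4.eval i]
  congr 1
  · rcases h with rfl | rfl
    · simp
    · simp [ht, Matrix.mulVec, dotProduct]
  · simp only [Matrix.mulVec, dotProduct]
    rw [integral_finsetSum _ fun l _ => h3 i l]
    refine Finset.sum_congr rfl fun l _ => ?_
    rw [cv_apply, ← integral_indicator hS]
    congr 1
    ext s
    by_cases hs : s ∈ S <;> simp [hs]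

theorem μP_eq : μP = volume.restrict (Ioi 0) := (restrict_Ioi_eq_restrict_Ici).symm
theorem μM_eq : μM = volume.restrict (Iio 0) := (restrict_Iio_eq_restrict_Iic).symm

/-- The Wiener algebra column of an element of `L¹(ℝ₊)ᵐ`. -/
def vP {m : ℕ} (f : L1P m) : Matrix (Fin m) (Fin 1) WA := colK (Ioi 0) f
/-- The Wiener algebra column of an element of `L¹(ℝ₋)ᵐ`. -/
def vM {m : ℕ} (f : L1M m) : Matrix (Fin m) (Fin 1) WA := colK (Iio 0) f

theorem intP {m : ℕ} (f : L1P m) : Integrable f (volume.restrict (Ioi 0)) :=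
  μP_eq ▸ L1.integrable_coeFn f

theorem intM {m : ℕ} (f : L1M m) : Integrable f (volume.restrict (Iio 0)) :=
  μM_eq ▸ L1.integrable_coeFn f

theorem colK_inj {m : ℕ} {S : Set ℝ} (hS : MeasurableSet S) {F G : ℝ → Fin m → ℂ}
    (hF : Integrable F (volume.restrict S)) (hG : Integrable G (volume.restrict S))
    (h : colK S F = colK S G) : F =ᵐ[volume.restrict S] G := by
  have : ∀ᵐ t, ∀ i, S.indicator (fun t => F t i) t = S.indicator (fun t => G t i) t :=
    ae_all_iff.2 fun i => (toK_eq_iff (colK_int hS hF i) (colK_int hS hG i)).1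
      (congrFun (congrFun h i) 0)
  rw [Filter.EventuallyEq, ae_restrict_iff' hS]
  filter_upwards [this] with t ht hs
  ext i
  simpa [hs] using ht i

theorem vP_inj {m : ℕ} {f g : L1P m} (h : vP f = vP g) : f = g :=
  Lp.ext (by
    have := colK_inj measurableSet_Ioi (intP f) (intP g) h
    rwa [← μP_eq] at this)

theorem vM_inj {m : ℕ} {f g : L1M m} (h : vM f = vM g) : f = g :=
  Lp.ext (by
    have := colK_inj measurableSet_Iio (intM f) (intM g) h
    rwa [← μM_eq] at this)

theorem colK_add {m : ℕ} {S : Set ℝ} (hS : MeasurableSet S) {F G H : ℝ → Fin m → ℂ}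
    (hF : Integrable F (volume.restrict S)) (hG : Integrable G (volume.restrict S))
    (h : H =ᵐ[volume.restrict S] F + G) : colK S H = colK S F + colK S G := by
  ext1 i j
  rw [Matrix.add_apply, colK_apply, colK_apply, colK_apply,
    ← toK_add (colK_int hS hF i) (colK_int hS hG i)]
  refine toK_congr ((colK_int hS hF i).add (colK_int hS hG i)) ?_
  rw [Filter.EventuallyEq, ae_restrict_iff' hS] at h
  filter_upwards [h] with t ht
  by_cases hs : t ∈ S
  · simp [hs, ht hs]
  · simp [hs]

theorem vP_add {m : ℕ} (f g : L1P m) : vP (f + g) = vP f + vP g :=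
  colK_add measurableSet_Ioi (intP f) (intP g) (by rw [← μP_eq]; exact Lp.coeFn_add f g)

theorem vM_add {m : ℕ} (f g : L1M m) : vM (f + g) = vM f + vM g :=
  colK_add measurableSet_Iio (intM f) (intM g) (by rw [← μM_eq]; exact Lp.coeFn_add f g)

theorem vP_sub {m : ℕ} (f g : L1P m) : vP (f - g) = vP f - vP g := by
  rw [eq_sub_iff_add_eq, ← vP_add, sub_add_cancel]

theorem vM_sub {m : ℕ} (f g : L1M m) : vM (f - g) = vM f - vM g := by
  rw [eq_sub_iff_add_eq, ← vM_add, sub_add_cancel]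

theorem vP_zero {m : ℕ} : vP (0 : L1P m) = 0 := by
  have := vP_add (0 : L1P m) 0
  rwa [add_zero, left_eq_add] at this

theorem vM_zero {m : ℕ} : vM (0 : L1M m) = 0 := by
  have := vM_add (0 : L1M m) 0
  rwa [add_zero, left_eq_add] at this

theorem Pp_vP {m : ℕ} (f : L1P m) : Pp.mapMatrix (vP f) = vP f := PK_colK _ (intP f)
theorem Pm_vM {m : ℕ} (f : L1M m) : Pm.mapMatrix (vM f) = vM f := PK_colK _ (intM f)

theorem vP_HP {k m : ℕ} {r : MatF k m} (hr : IntF r)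
    {H : L1M m →L[ℂ] L1P k} (hH : IsHP r H) (f : L1M m) :
    vP (H f) = Pp.mapMatrix (toKM r * vM f) := by
  refine (colK_link (r₀ := 0) measurableSet_Iio measurableSet_Ioi hr (Or.inl rfl) (intM f) ?_).trans
    ?_
  · simpa [μP_eq, μM_eq] using hH f
  · rw [Matrix.map_zero _ (map_zero _), zero_add]; rfl

theorem vM_HM {k m : ℕ} {r : MatF k m} (hr : IntF r)
    {H : L1P m →L[ℂ] L1M k} (hH : IsHM r H) (f : L1P m) :
    vM (H f) = Pm.mapMatrix (toKM r * vP f) := by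
  refine (colK_link (r₀ := 0) measurableSet_Ioi measurableSet_Iio hr (Or.inl rfl) (intP f) ?_).trans
    ?_
  · simpa [μP_eq, μM_eq] using hH f
  · rw [Matrix.map_zero _ (map_zero _), zero_add]; rfl

theorem vP_TP {k m : ℕ} {r : MatF k m} (hr : IntF r)
    {r₀ : Matrix (Fin k) (Fin m) ℂ} {T : L1P m →L[ℂ] L1P k} (hT : IsTP r₀ r T)
    (f : L1P m) : vP (T f) = Pp.mapMatrix ((r₀.map (algebraMap ℂ WA) + toKM r) * vP f) :=
  colK_link measurableSet_Ioi measurableSet_Ioi hr (Or.inr rfl) (intP f)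
    (by simpa [μP_eq] using hT f)

theorem vM_TM {k m : ℕ} {r : MatF k m} (hr : IntF r)
    {r₀ : Matrix (Fin k) (Fin m) ℂ} {T : L1M m →L[ℂ] L1M k} (hT : IsTM r₀ r T)
    (f : L1M m) : vM (T f) = Pm.mapMatrix ((r₀.map (algebraMap ℂ WA) + toKM r) * vM f) :=
  colK_link measurableSet_Iio measurableSet_Iio hr (Or.inr rfl) (intM f)
    (by simpa [μM_eq] using hT f)

end Bridge

/-- Theorem 1.1, formula for the inverse of `W`. -/
theorem stmt1 {p q : ℕ}
    (a : MatF p p) (b : MatF p q) (c : MatF q p) (d : MatF q q)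
    (ha : L1Plus a) (hb : L1Plus b) (hc : L1Minus c) (hd : L1Minus d)
    (g : MatF p q) (hg : L1Plus g) (hsol : EGSol a b c d g)
    (Hg : L1M q →L[ℂ] L1P p) (hHg : IsHP g Hg)
    (Hgs : L1P p →L[ℂ] L1M q) (hHgs : IsHM (adjF g) Hgs)
    (Tpα : L1P p →L[ℂ] L1P p) (hTpα : IsTP 1 a Tpα)
    (Tpαs : L1P p →L[ℂ] L1P p) (hTpαs : IsTP 1 (adjF a) Tpαs)
    (Tpβ : L1P q →L[ℂ] L1P p) (hTpβ : IsTP 0 b Tpβ)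
    (Tpβs : L1P p →L[ℂ] L1P q) (hTpβs : IsTP 0 (adjF b) Tpβs)
    (Tmδ : L1M q →L[ℂ] L1M q) (hTmδ : IsTM 1 d Tmδ)
    (Tmδs : L1M q →L[ℂ] L1M q) (hTmδs : IsTM 1 (adjF d) Tmδs)
    (Tmγ : L1M p →L[ℂ] L1M q) (hTmγ : IsTM 0 c Tmγ)
    (Tmγs : L1M q →L[ℂ] L1M p) (hTmγs : IsTM 0 (adjF c) Tmγs)
    (Hpα : L1M p →L[ℂ] L1P p) (hHpα : IsHP a Hpα)
    (Hpβ : L1M q →L[ℂ] L1P p) (hHpβ : IsHP b Hpβ)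
    (Hmγ : L1P p →L[ℂ] L1M q) (hHmγ : IsHM c Hmγ)
    (Hmδ : L1P q →L[ℂ] L1M q) (hHmδ : IsHM d Hmδ) :
    (blockCLM (Tpα.comp Tpαs - Tpβ.comp Tpβs) (Hpβ.comp Tmδs - Hpα.comp Tmγs)
        (Hmγ.comp Tpαs - Hmδ.comp Tpβs) (Tmδ.comp Tmδs - Tmγ.comp Tmγs)).comp
      (blockCLM (ContinuousLinearMap.id ℂ (L1P p)) Hg Hgs
        (ContinuousLinearMap.id ℂ (L1M q))) =
      ContinuousLinearMap.id ℂ (L1P p × L1M q) ∧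
    (blockCLM (ContinuousLinearMap.id ℂ (L1P p)) Hg Hgs
        (ContinuousLinearMap.id ℂ (L1M q))).comp
      (blockCLM (Tpα.comp Tpαs - Tpβ.comp Tpβs) (Hpβ.comp Tmδs - Hpα.comp Tmγs)
        (Hmγ.comp Tpαs - Hmδ.comp Tpβs) (Tmδ.comp Tmδs - Tmγ.comp Tmγs)) =
      ContinuousLinearMap.id ℂ (L1P p × L1M q) := by
  have hH := abstractEG_of_sol ha hb hc hd hg hsol
  have hS := hH.swap splitWA
  have one_map : ∀ {n : ℕ}, (1 : Matrix (Fin n) (Fin n) ℂ).map (algebraMap ℂ WA) = 1 :=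
    fun {n} => Matrix.map_one _ (map_zero _) (map_one _)
  have zero_map : ∀ {n k : ℕ}, (0 : Matrix (Fin n) (Fin k) ℂ).map (algebraMap ℂ WA) = 0 :=
    fun {n k} => Matrix.map_zero _ (map_zero _)
  have one_add_adj : ∀ {n : ℕ} {r : MatF n n}, IntF r → 1 + toKM (adjF r) = (1 + toKM r)ᴴ :=
    fun hr => by rw [Matrix.conjTranspose_add, Matrix.conjTranspose_one, toKM_adjF hr]
  have PpvM : ∀ {n : ℕ} (f : L1M n), Pp.mapMatrix (vM f) = 0 := fun f => by
    rw [← Pm_vM, splitWA.mat_PQ]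
  have PmvP : ∀ {n : ℕ} (f : L1P n), Pm.mapMatrix (vP f) = 0 := fun f => by
    rw [← Pp_vP, splitWA.swap.mat_PQ]
  set α := 1 + toKM a with hα
  set β := toKM b with hβ
  set γ := toKM c with hγ
  set δ := 1 + toKM d with hδ
  set G := toKM g with hG
  have eHg : ∀ f, vP (Hg f) = Pp.mapMatrix (G * vM f) := vP_HP hg.1 hHg
  have eHgs : ∀ f, vM (Hgs f) = Pm.mapMatrix (Gᴴ * vP f) := fun f => by
    rw [vM_HM (adjF_int hg.1) hHgs, toKM_adjF hg.1]
  have eTα : ∀ f, vP (Tpα f) = Pp.mapMatrix (α * vP f) := fun f => by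
    rw [vP_TP ha.1 hTpα, one_map]
  have eTαs : ∀ f, vP (Tpαs f) = Pp.mapMatrix (αᴴ * vP f) := fun f => by
    rw [vP_TP (adjF_int ha.1) hTpαs, one_map, one_add_adj ha.1]
  have eTβ : ∀ f, vP (Tpβ f) = Pp.mapMatrix (β * vP f) := fun f => by
    rw [vP_TP hb.1 hTpβ, zero_map, zero_add]
  have eTβs : ∀ f, vP (Tpβs f) = Pp.mapMatrix (βᴴ * vP f) := fun f => by
    rw [vP_TP (adjF_int hb.1) hTpβs, zero_map, zero_add, toKM_adjF hb.1]
  have eTδ : ∀ f, vM (Tmδ f) = Pm.mapMatrix (δ * vM f) := fun f => by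
    rw [vM_TM hd.1 hTmδ, one_map]
  have eTδs : ∀ f, vM (Tmδs f) = Pm.mapMatrix (δᴴ * vM f) := fun f => by
    rw [vM_TM (adjF_int hd.1) hTmδs, one_map, one_add_adj hd.1]
  have eTγ : ∀ f, vM (Tmγ f) = Pm.mapMatrix (γ * vM f) := fun f => by
    rw [vM_TM hc.1 hTmγ, zero_map, zero_add]
  have eTγs : ∀ f, vM (Tmγs f) = Pm.mapMatrix (γᴴ * vM f) := fun f => by
    rw [vM_TM (adjF_int hc.1) hTmγs, zero_map, zero_add, toKM_adjF hc.1]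
  have eHα : ∀ f, vP (Hpα f) = Pp.mapMatrix (α * vM f) := fun f => by
    rw [vP_HP ha.1 hHpα, hα, Matrix.add_mul, Matrix.one_mul, map_add, PpvM, zero_add]
  have eHβ : ∀ f, vP (Hpβ f) = Pp.mapMatrix (β * vM f) := vP_HP hb.1 hHpβ
  have eHγ : ∀ f, vM (Hmγ f) = Pm.mapMatrix (γ * vP f) := vM_HM hc.1 hHmγ
  have eHδ : ∀ f, vM (Hmδ f) = Pm.mapMatrix (δ * vP f) := fun f => by
    rw [vM_HM hd.1 hHmδ, hδ, Matrix.add_mul, Matrix.one_mul, map_add, PmvP, zero_add]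
  -- the columns of `W M = I`
  have R1 : ∀ f, (Tpα (Tpαs f) - Tpβ (Tpβs f)) + Hg (Hmγ (Tpαs f) - Hmδ (Tpβs f)) = f ∧
      Hgs (Tpα (Tpαs f) - Tpβ (Tpβs f)) + (Hmγ (Tpαs f) - Hmδ (Tpβs f)) = 0 := fun f => by
    have := hH.right_inv splitWA (Pp_vP f) (eTαs f) (eTβs f)
      (x := vP (Tpα (Tpαs f) - Tpβ (Tpβs f))) (y := vM (Hmγ (Tpαs f) - Hmδ (Tpβs f)))
      (by rw [vP_sub, eTα, eTβ]) (by rw [vM_sub, eHγ, eHδ])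
    exact ⟨vP_inj (by rw [vP_add, eHg, this.1]), vM_inj (by rw [vM_add, eHgs, this.2, vM_zero])⟩
  have R2 : ∀ f, (Tmδ (Tmδs f) - Tmγ (Tmγs f)) + Hgs (Hpβ (Tmδs f) - Hpα (Tmγs f)) = f ∧
      Hg (Tmδ (Tmδs f) - Tmγ (Tmγs f)) + (Hpβ (Tmδs f) - Hpα (Tmγs f)) = 0 := fun f => by
    have := hS.right_inv splitWA.swap (Pm_vM f) (eTδs f) (eTγs f)
      (x := vM (Tmδ (Tmδs f) - Tmγ (Tmγs f))) (y := vP (Hpβ (Tmδs f) - Hpα (Tmγs f)))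
      (by rw [vM_sub, eTδ, eTγ]) (by rw [vP_sub, eHβ, eHα])
    rw [Matrix.conjTranspose_conjTranspose] at this
    exact ⟨vM_inj (by rw [vM_add, eHgs, this.1]), vP_inj (by rw [vP_add, eHg, this.2, vP_zero])⟩
  -- the columns of `M W = I`
  have L1 : ∀ f, (Tpα (Tpαs f) - Tpβ (Tpβs f)) +
        (Hpβ (Tmδs (Hgs f)) - Hpα (Tmγs (Hgs f))) = f ∧
      (Hmγ (Tpαs f) - Hmδ (Tpβs f)) + (Tmδ (Tmδs (Hgs f)) - Tmγ (Tmγs (Hgs f))) = 0 := fun f => by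
    have := hH.left_inv splitWA (Pp_vP f) (eTαs f) (eTβs f) (eHgs f) (eTδs _) (eTγs _)
    refine ⟨vP_inj ?_, vM_inj ?_⟩
    · rw [vP_add, vP_sub, vP_sub, eTα, eTβ, eHβ, eHα, this.1]
    · rw [vM_add, vM_sub, vM_sub, eHγ, eHδ, eTδ, eTγ, this.2, vM_zero]
  have L2 : ∀ f, (Tmδ (Tmδs f) - Tmγ (Tmγs f)) +
        (Hmγ (Tpαs (Hg f)) - Hmδ (Tpβs (Hg f))) = f ∧
      (Hpβ (Tmδs f) - Hpα (Tmγs f)) + (Tpα (Tpαs (Hg f)) - Tpβ (Tpβs (Hg f))) = 0 := fun f => by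
    have := hS.left_inv splitWA.swap (Pm_vM f) (eTδs f) (eTγs f)
      (by rw [Matrix.conjTranspose_conjTranspose]; exact eHg f) (eTαs _) (eTβs _)
    refine ⟨vM_inj ?_, vP_inj ?_⟩
    · rw [vM_add, vM_sub, vM_sub, eTδ, eTγ, eHγ, eHδ, this.1]
    · rw [vP_add, vP_sub, vP_sub, eHβ, eHα, eTα, eTβ, this.2, vP_zero]
  constructor
  · refine ContinuousLinearMap.ext fun x => ?_
    obtain ⟨f, h⟩ := x
    obtain ⟨l1, l2⟩ := L1 f
    obtain ⟨l3, l4⟩ := L2 h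
    simp only [blockCLM, ContinuousLinearMap.comp_apply, ContinuousLinearMap.prod_apply,
      _root_.add_apply, _root_.sub_apply, ContinuousLinearMap.coe_fst',
      ContinuousLinearMap.coe_snd', ContinuousLinearMap.id_apply, map_add, Prod.mk.injEq]
    constructor
    · refine Eq.trans ?_ ((congrArg₂ (· + ·) l1 l4).trans (add_zero f))
      beta_reduce
      abel
    · refine Eq.trans ?_ ((congrArg₂ (· + ·) l2 l3).trans (zero_add h))
      beta_reduce
      abel
  · refine ContinuousLinearMap.ext fun x => ?_
    obtain ⟨f, h⟩ := x
    obtain ⟨r1, r2⟩ := R1 f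
    obtain ⟨r3, r4⟩ := R2 h
    simp only [map_sub] at r1 r2 r3 r4
    simp only [blockCLM, ContinuousLinearMap.comp_apply, ContinuousLinearMap.prod_apply,
      _root_.add_apply, _root_.sub_apply, ContinuousLinearMap.coe_fst',
      ContinuousLinearMap.coe_snd', ContinuousLinearMap.id_apply, map_add, map_sub,
      Prod.mk.injEq]
    constructor
    · refine Eq.trans ?_ ((congrArg₂ (· + ·) r1 r4).trans (add_zero f))
      beta_reduce
      abel
    · refine Eq.trans ?_ ((congrArg₂ (· + ·) r2 r3).trans (zero_add h))
      beta_reduce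
      abel
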